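/- If the metric of a Kenmotsu manifold of dimension 2n+1 is a gradient almost *-Ricci soliton, then the Ricci tensor satisfies S(X,Z) = (ξ(f + λ) - 2n - 1)g(X,Z) + (1 - ξ(f + λ))η(X)η(Z), i.e., M is η-Einstein. -/

import Mathlib

/-- An abstract algebraic model of a `(2n+1)`-dimensional Kenmotsu manifold:
`C` plays the role of the ring of smooth functions on the manifold and vector
fields are modelled as `ℝ`-derivations of `C`.  A global orthonormal frame `e`
is included in order to express traces (Ricci tensor, scalar curvature). -/
structure KenmotsuManifold (n : ℕ) (C : Type*) [CommRing C] [Algebra ℝ C] where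
  /-- the Riemannian metric -/
  g : Derivation ℝ C C → Derivation ℝ C C → C
  /-- the structure `(1,1)`-tensor field -/
  φ : Derivation ℝ C C → Derivation ℝ C C
  /-- the Reeb (characteristic) vector field -/
  ξ : Derivation ℝ C C
  /-- the contact `1`-form -/
  η : Derivation ℝ C C → C
  /-- the Levi-Civita connection -/
  nabla : Derivation ℝ C C → Derivation ℝ C C → Derivation ℝ C C
  /-- a global orthonormal frame, used to take traces -/
  e : Fin (2 * n + 1) → Derivation ℝ C C
  g_symm : ∀ X Y, g X Y = g Y X
  g_add_left : ∀ X Y Z, g (X + Y) Z = g X Z + g Y Z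
  g_smul_left : ∀ (f : C) (X Y), g (f • X) Y = f * g X Y
  g_nondeg : ∀ X, (∀ Y, g X Y = 0) → X = 0
  g_frame : ∀ i j, g (e i) (e j) = if i = j then 1 else 0
  frame_span : ∀ X : Derivation ℝ C C, X = ∑ i, g X (e i) • e i
  phi_phi : ∀ X, φ (φ X) = -X + η X • ξ
  phi_linear : ∀ (f : C) (X Y), φ (f • X + Y) = f • φ X + φ Y
  eta_xi : η ξ = 1
  eta_def : ∀ X, η X = g X ξ
  compat_phi : ∀ X Y, g (φ X) (φ Y) = g X Y - η X * η Y
  nabla_add_left : ∀ X Y Z, nabla (X + Y) Z = nabla X Z + nabla Y Z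
  nabla_smul_left : ∀ (f : C) (X Y), nabla (f • X) Y = f • nabla X Y
  nabla_add_right : ∀ X Y Z, nabla X (Y + Z) = nabla X Y + nabla X Z
  nabla_leibniz : ∀ (X) (f : C) (Y), nabla X (f • Y) = X f • Y + f • nabla X Y
  torsion_free : ∀ X Y, nabla X Y - nabla Y X = ⁅X, Y⁆
  metric_compat : ∀ X Y Z, X (g Y Z) = g (nabla X Y) Z + g Y (nabla X Z)
  /-- the Kenmotsu condition `(∇_X φ)Y = g(φX,Y)ξ - η(Y)φX` -/
  kenmotsu : ∀ X Y, nabla X (φ Y) - φ (nabla X Y) = g (φ X) Y • ξ - η Y • φ X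

namespace KenmotsuManifold

variable {n : ℕ} {C : Type*} [CommRing C] [Algebra ℝ C] (K : KenmotsuManifold n C)

/-- the Riemann curvature tensor `R(X,Y)Z = ∇_X∇_Y Z - ∇_Y∇_X Z - ∇_{[X,Y]}Z` -/
def Rm (X Y Z : Derivation ℝ C C) : Derivation ℝ C C :=
  K.nabla X (K.nabla Y Z) - K.nabla Y (K.nabla X Z) - K.nabla ⁅X, Y⁆ Z

/-- the Ricci tensor `S(X,Y) = trace (Z ↦ R(Z,X)Y)` -/
def S (X Y : Derivation ℝ C C) : C := ∑ i, K.g (K.Rm (K.e i) X Y) (K.e i)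

/-- the Ricci operator `Q`, `g(QX,Y) = S(X,Y)` -/
def Q (X : Derivation ℝ C C) : Derivation ℝ C C := ∑ i, K.S X (K.e i) • K.e i

/-- the scalar curvature `r` -/
def r : C := ∑ i, K.S (K.e i) (K.e i)

/-- the `*`-Ricci tensor `S*(X,Y) = (1/2) trace (Z ↦ R(X,φY)φZ)` -/
noncomputable def Sstar (X Y : Derivation ℝ C C) : C :=
  (2 : ℝ)⁻¹ • ∑ i, K.g (K.Rm X (K.φ Y) (K.φ (K.e i))) (K.e i)

/-- the covariant derivative `(∇_X Q)Y` of the Ricci operator -/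
def nablaQ (X Y : Derivation ℝ C C) : Derivation ℝ C C :=
  K.nabla X (K.Q Y) - K.Q (K.nabla X Y)

/-- the Lie derivative `(£_V g)(X,Y)` of the metric -/
def lieG (V X Y : Derivation ℝ C C) : C :=
  V (K.g X Y) - K.g ⁅V, X⁆ Y - K.g X ⁅V, Y⁆

/-- the Lie derivative `(£_V S)(X,Y)` of the Ricci tensor -/
def lieS (V X Y : Derivation ℝ C C) : C :=
  V (K.S X Y) - K.S ⁅V, X⁆ Y - K.S X ⁅V, Y⁆

/-- `g` is a `*`-Ricci soliton with potential vector field `V` and soliton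
constant `l`: `£_V g + 2S* + 2l g = 0`. -/
def IsStarRicciSoliton (V : Derivation ℝ C C) (l : ℝ) : Prop :=
  ∀ X Y, K.lieG V X Y + 2 * K.Sstar X Y + (2 * l) • K.g X Y = 0

/-- `g` is a gradient almost `*`-Ricci soliton with potential function `f`
(with gradient `F`, i.e. `g(F,X) = Xf`) and soliton function `l`:
`Hess f + S* + l g = 0`. -/
def IsGradAlmostStarRicciSoliton (f : C) (F : Derivation ℝ C C) (l : C) : Prop :=
  (∀ X, K.g F X = X f) ∧ ∀ X Y, K.g (K.nabla X F) Y + K.Sstar X Y + l * K.g X Y = 0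

/-- `M` is `η`-Einstein: `S = α g + β η⊗η`. -/
def IsEtaEinstein : Prop :=
  ∃ α β : C, ∀ X Y, K.S X Y = α * K.g X Y + β * (K.η X * K.η Y)

end KenmotsuManifold

namespace KenmotsuManifold

section Basic

variable {n : ℕ} {C : Type*} [CommRing C] [Algebra ℝ C] (K : KenmotsuManifold n C)

theorem two_cancel {x : C} (h : 2 * x = 0) : x = 0 := by
  have h2 : ((2 : ℝ)⁻¹) • (2 * x) = x := by
    have : (2 : C) * x = (2 : ℝ) • x := by
      rw [two_mul, two_smul]
    rw [this, smul_smul]; norm_num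
  rw [← h2, h, smul_zero]

theorem g_add_right (X Y Z : Derivation ℝ C C) : K.g X (Y + Z) = K.g X Y + K.g X Z := by
  rw [K.g_symm, K.g_add_left, K.g_symm Y, K.g_symm Z]

theorem g_smul_right (f : C) (X Y : Derivation ℝ C C) : K.g X (f • Y) = f * K.g X Y := by
  rw [K.g_symm, K.g_smul_left, K.g_symm Y]

theorem g_zero_left (X : Derivation ℝ C C) : K.g 0 X = 0 := by
  simpa using K.g_smul_left 0 0 X

theorem g_zero_right (X : Derivation ℝ C C) : K.g X 0 = 0 := by
  rw [K.g_symm, K.g_zero_left]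

theorem g_neg_left (X Y : Derivation ℝ C C) : K.g (-X) Y = - K.g X Y := by
  simpa using K.g_smul_left (-1) X Y

theorem g_neg_right (X Y : Derivation ℝ C C) : K.g X (-Y) = - K.g X Y := by
  simpa using K.g_smul_right (-1) X Y

theorem g_sub_left (X Y Z : Derivation ℝ C C) : K.g (X - Y) Z = K.g X Z - K.g Y Z := by
  rw [sub_eq_add_neg, K.g_add_left, K.g_neg_left, sub_eq_add_neg]

theorem g_sub_right (X Y Z : Derivation ℝ C C) : K.g X (Y - Z) = K.g X Y - K.g X Z := by
  rw [sub_eq_add_neg, K.g_add_right, K.g_neg_right, sub_eq_add_neg]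

theorem nabla_neg_left (X Y : Derivation ℝ C C) : K.nabla (-X) Y = - K.nabla X Y := by
  simpa using K.nabla_smul_left (-1) X Y

theorem nabla_neg_right (X Y : Derivation ℝ C C) : K.nabla X (-Y) = - K.nabla X Y := by
  simpa using K.nabla_leibniz X (-1) Y

theorem nabla_sub_left (X Y Z : Derivation ℝ C C) :
    K.nabla (X - Y) Z = K.nabla X Z - K.nabla Y Z := by
  rw [sub_eq_add_neg, K.nabla_add_left, K.nabla_neg_left, sub_eq_add_neg]

theorem nabla_sub_right (X Y Z : Derivation ℝ C C) :
    K.nabla X (Y - Z) = K.nabla X Y - K.nabla X Z := by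
  rw [sub_eq_add_neg, K.nabla_add_right, K.nabla_neg_right, sub_eq_add_neg]

theorem nabla_zero_right (X : Derivation ℝ C C) : K.nabla X 0 = 0 := by
  simpa using K.nabla_leibniz X 0 0

theorem phi_zero : K.φ 0 = 0 := by
  have := K.phi_linear 1 0 0
  simpa using this

theorem phi_add (X Y : Derivation ℝ C C) : K.φ (X + Y) = K.φ X + K.φ Y := by
  simpa using K.phi_linear 1 X Y

theorem phi_smul (f : C) (X : Derivation ℝ C C) : K.φ (f • X) = f • K.φ X := by
  simpa [K.phi_zero] using K.phi_linear f X 0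

theorem phi_neg (X : Derivation ℝ C C) : K.φ (-X) = - K.φ X := by
  simpa using K.phi_smul (-1) X

theorem phi_sub (X Y : Derivation ℝ C C) : K.φ (X - Y) = K.φ X - K.φ Y := by
  rw [sub_eq_add_neg, K.phi_add, K.phi_neg, sub_eq_add_neg]

theorem g_ext {X Y : Derivation ℝ C C} (h : ∀ Z, K.g X Z = K.g Y Z) : X = Y := by
  rw [← sub_eq_zero]
  apply K.g_nondeg
  intro Z
  rw [K.g_sub_left, h, sub_self]

theorem eta_add (X Y : Derivation ℝ C C) : K.η (X + Y) = K.η X + K.η Y := by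
  simp only [K.eta_def, K.g_add_left]

theorem eta_sub (X Y : Derivation ℝ C C) : K.η (X - Y) = K.η X - K.η Y := by
  simp only [K.eta_def, K.g_sub_left]

theorem eta_neg (X : Derivation ℝ C C) : K.η (-X) = - K.η X := by
  simp only [K.eta_def, K.g_neg_left]

theorem eta_smul (f : C) (X : Derivation ℝ C C) : K.η (f • X) = f * K.η X := by
  simp only [K.eta_def, K.g_smul_left]

theorem g_xi_right (X : Derivation ℝ C C) : K.g X K.ξ = K.η X := (K.eta_def X).symm

theorem g_xi_left (X : Derivation ℝ C C) : K.g K.ξ X = K.η X := by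
  rw [K.g_symm, K.g_xi_right]

/-- `R` with the bracket replaced using torsion-freeness. -/
theorem Rm_eq (X Y Z : Derivation ℝ C C) : K.Rm X Y Z =
    K.nabla X (K.nabla Y Z) - K.nabla Y (K.nabla X Z)
      - (K.nabla (K.nabla X Y) Z - K.nabla (K.nabla Y X) Z) := by
  rw [Rm, ← K.torsion_free, K.nabla_sub_left]

theorem Rm_swap (X Y Z : Derivation ℝ C C) : K.Rm X Y Z = - K.Rm Y X Z := by
  rw [Rm_eq, Rm_eq]; abel

theorem Rm_add_left (X X' Y Z : Derivation ℝ C C) :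
    K.Rm (X + X') Y Z = K.Rm X Y Z + K.Rm X' Y Z := by
  simp only [Rm_eq, K.nabla_add_left, K.nabla_add_right]; abel

theorem Rm_smul_left (f : C) (X Y Z : Derivation ℝ C C) :
    K.Rm (f • X) Y Z = f • K.Rm X Y Z := by
  simp only [Rm_eq, K.nabla_smul_left, K.nabla_leibniz, K.nabla_add_left]; module

theorem Rm_add_mid (X Y Y' Z : Derivation ℝ C C) :
    K.Rm X (Y + Y') Z = K.Rm X Y Z + K.Rm X Y' Z := by
  simp only [Rm_eq, K.nabla_add_left, K.nabla_add_right]; abel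

theorem Rm_smul_mid (f : C) (X Y Z : Derivation ℝ C C) :
    K.Rm X (f • Y) Z = f • K.Rm X Y Z := by
  rw [Rm_swap, Rm_smul_left, Rm_swap K X Y, smul_neg]

theorem nabla_comm_apply (X Y : Derivation ℝ C C) (f : C) :
    (K.nabla X Y) f - (K.nabla Y X) f = X (Y f) - Y (X f) := by
  rw [← Derivation.commutator_apply, ← K.torsion_free, Derivation.sub_apply]

theorem Rm_add_right (X Y Z Z' : Derivation ℝ C C) :
    K.Rm X Y (Z + Z') = K.Rm X Y Z + K.Rm X Y Z' := by
  simp only [Rm_eq, K.nabla_add_right]; abel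

theorem Rm_skew (X Y Z W : Derivation ℝ C C) :
    K.g (K.Rm X Y Z) W = - K.g (K.Rm X Y W) Z := by
  have h := K.nabla_comm_apply X Y (K.g Z W)
  simp only [K.metric_compat, map_add] at h
  simp only [Rm_eq, K.g_sub_left]
  rw [K.g_symm Z (K.nabla (K.nabla X Y) W), K.g_symm Z (K.nabla (K.nabla Y X) W),
    K.g_symm Z (K.nabla X (K.nabla Y W)), K.g_symm Z (K.nabla Y (K.nabla X W))] at h
  linear_combination -h

theorem bianchi (X Y Z : Derivation ℝ C C) :
    K.Rm X Y Z + K.Rm Y Z X + K.Rm Z X Y = 0 := by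
  have h := lie_jacobi X Y Z
  simp only [← K.torsion_free, K.nabla_sub_left, K.nabla_sub_right] at h
  simp only [Rm_eq]
  rw [← h]; abel

theorem pair_symm (X Y Z W : Derivation ℝ C C) :
    K.g (K.Rm X Y Z) W = K.g (K.Rm Z W X) Y := by
  have b : ∀ X Y Z W, K.g (K.Rm X Y Z) W + K.g (K.Rm Y Z X) W + K.g (K.Rm Z X Y) W = 0 := by
    intro X Y Z W
    rw [← K.g_add_left, ← K.g_add_left, K.bianchi, K.g_zero_left]
  have sw : ∀ X Y Z W, K.g (K.Rm X Y Z) W = - K.g (K.Rm Y X Z) W := by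
    intro X Y Z W
    rw [K.Rm_swap, K.g_neg_left]
  have b1 := b X Y Z W
  have b2 := b Y Z W X
  have b3 := b Z W X Y
  have b4 := b W X Y Z
  rw [← sub_eq_zero]
  apply two_cancel
  rw [K.Rm_skew Y Z W X, K.Rm_skew Z W Y X] at b2
  rw [K.Rm_skew W X Z Y, sw W X Y Z, K.Rm_skew X W Y Z, K.Rm_skew X Z W Y, sw X Z Y W] at b3
  rw [K.Rm_skew X Y W Z, sw W X Y Z, K.Rm_skew X W Y Z, sw Y W X Z, K.Rm_skew W Y X Z] at b4
  rw [sw W Y Z X] at b2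
  rw [sw W Y Z X] at b4
  rw [sw X W Z Y] at b4
  grind



theorem xi_nabla_eta (X : Derivation ℝ C C) : K.η (K.nabla X K.ξ) = 0 := by
  have h := K.metric_compat X K.ξ K.ξ
  rw [K.g_xi_left, K.eta_xi, Derivation.map_one_eq_zero, K.g_xi_left, K.g_xi_right] at h
  apply two_cancel
  linear_combination -h

theorem phi_xi_aux : K.φ K.ξ = K.η (K.φ K.ξ) • K.ξ := by
  have h := K.phi_phi (K.φ K.ξ)
  have h2 : K.φ (K.φ K.ξ) = 0 := by rw [K.phi_phi, K.eta_xi]; simp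
  rw [h2, K.phi_zero] at h
  linear_combination (norm := module) (1 : C) • h

theorem c_sq : K.η (K.φ K.ξ) * K.η (K.φ K.ξ) = 0 := by
  have h2 : K.φ (K.φ K.ξ) = 0 := by rw [K.phi_phi, K.eta_xi]; simp
  rw [K.phi_xi_aux, K.phi_smul, K.phi_xi_aux, smul_smul] at h2
  have h3 := congrArg K.η h2
  simp only [K.eta_smul, K.eta_xi, mul_one] at h3
  rw [h3, K.eta_def, K.g_zero_left]

theorem eta_phi_aux (X : Derivation ℝ C C) : K.η (K.φ X) = K.η (K.φ K.ξ) * K.η X := by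
  have h := K.phi_phi (K.φ X)
  rw [K.phi_phi X, K.phi_add, K.phi_neg, K.phi_smul] at h
  have h3 := congrArg K.η h
  simp only [K.eta_add, K.eta_neg, K.eta_smul, K.eta_xi] at h3
  linear_combination -h3

theorem Xc (X : Derivation ℝ C C) : X (K.η (K.φ K.ξ)) = 0 := by
  have h := K.kenmotsu X K.ξ
  rw [K.phi_xi_aux, K.nabla_leibniz] at h
  have h3 := congrArg K.η h
  simp only [K.eta_add, K.eta_sub, K.eta_smul, K.eta_xi, K.xi_nabla_eta,
    K.g_xi_right] at h3
  have e := K.eta_phi_aux (K.nabla X K.ξ)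
  rw [K.xi_nabla_eta] at e
  linear_combination h3 + e

theorem nabla_xi_aux (X : Derivation ℝ C C) :
    K.nabla X K.ξ = X - K.η X • K.ξ - K.η (K.φ K.ξ) • K.φ X := by
  have h := K.kenmotsu X K.ξ
  have cs := K.c_sq
  have px := K.phi_xi_aux
  have e := K.eta_phi_aux X
  have xc := K.Xc X
  set c := K.η (K.φ K.ξ)
  rw [px, K.nabla_leibniz, xc, K.g_xi_right, e, K.eta_xi] at h
  have h' : K.φ (K.nabla X K.ξ) = K.φ X - (c * K.η X) • K.ξ + c • K.nabla X K.ξ := by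
    linear_combination (norm := module) (-1 : C) • h
  have h2 := congrArg K.φ h'
  rw [K.phi_phi, K.xi_nabla_eta, K.phi_add, K.phi_sub, K.phi_phi, K.phi_smul, K.phi_smul, h', px]
    at h2
  have cz : ∀ Y : Derivation ℝ C C, (c * c) • Y = 0 := by intro Y; rw [cs, zero_smul]
  have z1 := cz (K.nabla X K.ξ)
  have z2 := cz (K.η X • K.ξ)
  have : K.nabla X K.ξ - (X - K.η X • K.ξ - c • K.φ X) =
     (2:C) • ((c * c) • (K.η X • K.ξ)) - (c * c) • K.nabla X K.ξ := by
    linear_combination (norm := module) (-1 : C) • h2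
  rw [z1, z2] at this
  rw [← sub_eq_zero, this]; simp

theorem phi_skew_aux (X Y : Derivation ℝ C C) :
    K.g (K.φ X) Y + K.g X (K.φ Y) = 2 * (K.η (K.φ K.ξ) * K.η X * K.η Y) := by
  have h := K.compat_phi (K.φ X) Y
  rw [K.phi_phi, K.g_add_left, K.g_neg_left, K.g_smul_left, K.g_xi_left, K.eta_phi_aux X,
    K.eta_phi_aux Y] at h
  linear_combination -h

theorem c_tensor (W X : Derivation ℝ C C) :
    K.η (K.φ K.ξ) * (K.g W X - K.η W * K.η X) = 0 := by
  have h := congrArg W (K.phi_skew_aux X K.ξ)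
  have k1 := congrArg (fun V => K.g V K.ξ) (K.kenmotsu W X)
  have k2 := congrArg (fun V => K.g X V) (K.kenmotsu W K.ξ)
  have s1 := K.phi_skew_aux (K.nabla W X) K.ξ
  have s2 := K.phi_skew_aux X (K.nabla W K.ξ)
  have xc := K.Xc W
  have m := K.metric_compat W X K.ξ
  have cs := K.c_sq
  have e := K.eta_phi_aux W
  have e2 := K.xi_nabla_eta W
  have nx := congrArg (fun V => K.g X V) (K.nabla_xi_aux W)
  simp only [map_add, K.metric_compat] at h
  simp only [K.g_sub_left, K.g_sub_right, K.g_smul_left, K.g_smul_right, K.g_xi_right,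
    K.eta_xi] at h k1 k2 s1 s2 m nx
  have e3 : W (2 * (K.η (K.φ K.ξ) * K.η X * 1)) = 2 * (K.η (K.φ K.ξ) * W (K.η X)) := by
    rw [two_mul, map_add, mul_one, Derivation.leibniz, xc]; simp; ring
  rw [e3] at h
  rw [e2] at s2
  rw [K.g_symm X W] at nx
  rw [K.g_symm X (K.φ W)] at k2 nx
  apply two_cancel
  grind

theorem g_sum_left {ι : Type*} (s : Finset ι) (v : ι → Derivation ℝ C C)
    (Y : Derivation ℝ C C) : K.g (∑ i ∈ s, v i) Y = ∑ i ∈ s, K.g (v i) Y := by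
  classical
  induction s using Finset.induction_on with
  | empty => simp [K.g_zero_left]
  | insert a s ha ih => rw [Finset.sum_insert ha, Finset.sum_insert ha, K.g_add_left, ih]

/-- Parseval for the frame. -/
theorem frame_sum (X Y : Derivation ℝ C C) : ∑ i, K.g X (K.e i) * K.g (K.e i) Y = K.g X Y := by
  conv_rhs => rw [K.frame_span X, K.g_sum_left]
  simp only [K.g_smul_left]

theorem frame_trace : ∑ i, K.g (K.e i) (K.e i) = 2 * (n : C) + 1 := by
  simp [K.g_frame]

theorem nat_cancel (hn : n ≠ 0) {x : C} (h : (n : C) * x = 0) : x = 0 := by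
  have h2 : ((n : ℝ)⁻¹) • ((n : C) * x) = x := by
    have : (n : C) * x = (n : ℝ) • x := by
      rw [Algebra.smul_def, map_natCast]
    rw [this, smul_smul, inv_mul_cancel₀ (by exact_mod_cast hn), one_smul]
  rw [← h2, h, smul_zero]

theorem c_zero (hn : n ≠ 0) : K.η (K.φ K.ξ) = 0 := by
  have h : ∑ i, K.η (K.φ K.ξ) * (K.g (K.e i) (K.e i) - K.η (K.e i) * K.η (K.e i)) = 0 :=
    Finset.sum_eq_zero (fun i _ => K.c_tensor (K.e i) (K.e i))
  have h2 := K.frame_sum K.ξ K.ξ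
  simp only [K.g_xi_left, K.g_xi_right, K.eta_xi] at h2
  rw [← Finset.mul_sum, Finset.sum_sub_distrib, K.frame_trace, h2] at h
  apply nat_cancel hn
  apply two_cancel
  linear_combination h

theorem phi_xi (hn : n ≠ 0) : K.φ K.ξ = 0 := by
  rw [K.phi_xi_aux, K.c_zero hn, zero_smul]

theorem eta_phi (hn : n ≠ 0) (X : Derivation ℝ C C) : K.η (K.φ X) = 0 := by
  rw [K.eta_phi_aux, K.c_zero hn, zero_mul]

theorem nabla_xi (hn : n ≠ 0) (X : Derivation ℝ C C) :
    K.nabla X K.ξ = X - K.η X • K.ξ := by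
  rw [K.nabla_xi_aux, K.c_zero hn, zero_smul, sub_zero]

theorem phi_skew (hn : n ≠ 0) (X Y : Derivation ℝ C C) :
    K.g (K.φ X) Y = - K.g X (K.φ Y) := by
  have h := K.phi_skew_aux X Y
  rw [K.c_zero hn] at h
  linear_combination h

theorem d_eta (hn : n ≠ 0) (X Y : Derivation ℝ C C) :
    X (K.η Y) = K.η (K.nabla X Y) + K.g X Y - K.η X * K.η Y := by
  rw [K.eta_def Y, K.metric_compat, K.nabla_xi hn, K.g_sub_right, K.g_smul_right,
    K.g_xi_right, K.g_xi_right, K.g_symm Y X]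
  ring

theorem Rm_xi_right (hn : n ≠ 0) (X Y : Derivation ℝ C C) :
    K.Rm X Y K.ξ = K.η X • Y - K.η Y • X := by
  simp only [Rm_eq, K.nabla_xi hn, K.nabla_sub_right, K.nabla_leibniz, K.d_eta hn,
    K.g_symm Y X]
  module

theorem Rm_xi_left (hn : n ≠ 0) (X Y : Derivation ℝ C C) :
    K.Rm K.ξ X Y = K.η Y • X - K.g X Y • K.ξ := by
  apply K.g_ext
  intro W
  rw [K.pair_symm, K.Rm_xi_right hn]
  simp only [K.g_sub_left, K.g_smul_left, K.g_xi_left, K.g_symm Y X, K.g_symm W X]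
  ring

/-- Ricci identity for `φ`. -/
theorem Rm_phi (hn : n ≠ 0) (X Y Z : Derivation ℝ C C) :
    K.Rm X Y (K.φ Z) = K.φ (K.Rm X Y Z) + K.g Y Z • K.φ X - K.g X Z • K.φ Y
      + K.g X (K.φ Z) • Y - K.g Y (K.φ Z) • X := by
  have k : ∀ X Y, K.nabla X (K.φ Y) = K.φ (K.nabla X Y) + (K.g (K.φ X) Y • K.ξ - K.η Y • K.φ X) :=
    fun X Y => by rw [← K.kenmotsu]; abel
  have sk := K.phi_skew hn
  simp only [Rm_eq, k, K.nabla_add_right, K.nabla_sub_right, K.nabla_leibniz, K.phi_sub,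
    K.metric_compat, K.d_eta hn, K.nabla_xi hn, K.g_add_left,
    K.g_sub_left, K.g_smul_left, K.g_xi_left]
  rw [sk X Z, sk Y Z]
  module

/-- Trace of a linear map composed with a skew one. -/
theorem trace_skew (L : Derivation ℝ C C → Derivation ℝ C C)
    (hadd : ∀ X Y, L (X + Y) = L X + L Y) (hsmul : ∀ (f : C) X, L (f • X) = f • L X)
    (b : Fin (2 * n + 1) → Derivation ℝ C C)
    (hb : ∀ i j, K.g (b i) (K.e j) = - K.g (K.e i) (b j)) :
    ∑ i, K.g (L (b i)) (K.e i) = - ∑ i, K.g (L (K.e i)) (b i) := by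
  let L' : Derivation ℝ C C →ₗ[C] Derivation ℝ C C :=
    { toFun := L, map_add' := hadd, map_smul' := hsmul }
  have h1 : ∀ i, K.g (L (b i)) (K.e i)
      = ∑ j, K.g (b i) (K.e j) * K.g (L (K.e j)) (K.e i) := by
    intro i
    have : L (b i) = ∑ j, K.g (b i) (K.e j) • L (K.e j) := by
      conv_lhs => rw [K.frame_span (b i)]
      change L' _ = _
      rw [map_sum]
      simp only [map_smul]
      rfl
    rw [this, K.g_sum_left]
    simp only [K.g_smul_left]
  have h2 : ∀ i, K.g (L (K.e i)) (b i)
      = ∑ j, K.g (L (K.e i)) (K.e j) * K.g (K.e j) (b i) := by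
    intro i
    rw [K.frame_sum]
  simp only [h1, h2]
  rw [Finset.sum_comm, ← Finset.sum_neg_distrib]
  refine Finset.sum_congr rfl fun i _ => ?_
  rw [← Finset.sum_neg_distrib]
  refine Finset.sum_congr rfl fun j _ => ?_
  rw [hb]
  ring

theorem Sstar_eq (hn : n ≠ 0) (X Y : Derivation ℝ C C) :
    K.Sstar X Y = K.S X Y + (2 * (n : C) - 1) * K.g X Y + K.η X * K.η Y := by
  have hA : ∑ i, K.g (K.Rm (K.φ (K.e i)) X (K.φ Y)) (K.e i)
      = - ∑ i, K.g (K.Rm (K.e i) X (K.φ Y)) (K.φ (K.e i)) :=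
    K.trace_skew (fun V => K.Rm V X (K.φ Y)) (fun _ _ => K.Rm_add_left _ _ _ _)
      (fun _ _ => K.Rm_smul_left _ _ _ _) (fun i => K.φ (K.e i)) (fun i j => K.phi_skew hn _ _)
  have hB : ∑ i, K.g (K.Rm (K.φ Y) (K.φ (K.e i)) X) (K.e i)
      = - ∑ i, K.g (K.Rm (K.e i) X (K.φ Y)) (K.φ (K.e i)) := by
    rw [← Finset.sum_neg_distrib]
    refine Finset.sum_congr rfl fun i _ => ?_
    rw [K.pair_symm, K.Rm_swap, K.g_neg_left]
  have hC : ∑ i, K.g (K.Rm X (K.φ Y) (K.φ (K.e i))) (K.e i)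
      = 2 * ∑ i, K.g (K.Rm (K.e i) X (K.φ Y)) (K.φ (K.e i)) := by
    have : ∀ i, K.g (K.Rm X (K.φ Y) (K.φ (K.e i))) (K.e i)
        = - K.g (K.Rm (K.φ Y) (K.φ (K.e i)) X) (K.e i)
          - K.g (K.Rm (K.φ (K.e i)) X (K.φ Y)) (K.e i) := by
      intro i
      have b := congrArg (fun V => K.g V (K.e i)) (K.bianchi X (K.φ Y) (K.φ (K.e i)))
      simp only [K.g_add_left, K.g_zero_left] at b
      linear_combination b
    simp only [this]
    rw [Finset.sum_sub_distrib, Finset.sum_neg_distrib, hA, hB]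
    ring
  have hD : ∀ i, K.g (K.Rm (K.e i) X (K.φ Y)) (K.φ (K.e i))
      = K.g (K.Rm (K.e i) X Y) (K.e i)
        - (K.η (K.e i) * (K.η (K.e i) * (- K.g X Y)) + K.η X * (K.g Y (K.e i) * K.η (K.e i)))
        + K.g X Y * (K.g (K.e i) (K.e i) - K.η (K.e i) * K.η (K.e i))
        - K.g Y (K.e i) * (K.g (K.e i) X - K.η X * K.η (K.e i))
        + K.g (K.φ Y) (K.e i) * (- K.g (K.e i) (K.φ X)) := by
    intro i
    have q1 : K.η (K.Rm (K.e i) X Y) = K.η (K.e i) * (- K.g X Y) + K.η X * K.g Y (K.e i) := by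
      rw [K.eta_def (K.Rm _ _ _), K.Rm_skew, K.Rm_xi_right hn, K.g_sub_left, K.g_smul_left,
        K.g_smul_left, K.g_symm (K.e i) Y]
      ring
    have q2 : K.g (K.e i) (K.φ (K.e i)) = 0 := by
      apply two_cancel
      have := K.phi_skew hn (K.e i) (K.e i)
      rw [K.g_symm] at this
      linear_combination this
    have q3 := K.phi_skew hn X (K.e i)
    rw [K.Rm_phi hn]
    simp only [K.g_add_left, K.g_sub_left, K.g_smul_left, K.compat_phi, q1, q2]
    rw [K.g_symm X (K.e i), K.g_symm (K.e i) Y, K.g_symm (K.e i) (K.φ Y),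
      K.g_symm (K.e i) (K.φ X), q3]
    ring
  have t1 := K.frame_sum K.ξ K.ξ
  have t2 := K.frame_sum Y K.ξ
  have t3 := K.frame_sum Y X
  have t4 := K.frame_sum (K.φ Y) (K.φ X)
  have t5 := K.frame_trace
  simp only [K.g_xi_left, K.g_xi_right, K.eta_xi] at t1 t2
  rw [K.compat_phi] at t4
  have hE : ∑ i, K.g (K.Rm (K.e i) X (K.φ Y)) (K.φ (K.e i))
      = K.S X Y + (2 * (n : C) - 1) * K.g X Y + K.η X * K.η Y := by
    have hF : ∀ i, K.g (K.Rm (K.e i) X (K.φ Y)) (K.φ (K.e i))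
        = K.g (K.Rm (K.e i) X Y) (K.e i) + K.g X Y * K.g (K.e i) (K.e i)
          - K.g Y (K.e i) * K.g (K.e i) X - K.g (K.φ Y) (K.e i) * K.g (K.e i) (K.φ X) := by
      intro i; rw [hD]; ring
    simp only [hF, Finset.sum_add_distrib, Finset.sum_sub_distrib, ← Finset.mul_sum, t3, t4, t5]
    rw [S, K.g_symm Y X]
    ring
  rw [Sstar, hC, hE, two_mul, ← two_smul ℝ, smul_smul]
  norm_num

theorem S_symm (X Y : Derivation ℝ C C) : K.S X Y = K.S Y X := by
  unfold S
  refine Finset.sum_congr rfl fun i _ => ?_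
  rw [K.pair_symm, K.Rm_swap, K.g_neg_left, K.Rm_skew, neg_neg]

theorem S_xi (hn : n ≠ 0) (X : Derivation ℝ C C) : K.S X K.ξ = - (2 * (n : C)) * K.η X := by
  have t2 := K.frame_sum X K.ξ
  have t5 := K.frame_trace
  simp only [K.g_xi_right] at t2
  unfold S
  have : ∀ i, K.g (K.Rm (K.e i) X K.ξ) (K.e i)
      = K.g X (K.e i) * K.η (K.e i) - K.η X * K.g (K.e i) (K.e i) := by
    intro i
    rw [K.Rm_xi_right hn, K.g_sub_left, K.g_smul_left, K.g_smul_left]; ring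
  simp only [this, Finset.sum_sub_distrib, ← Finset.mul_sum, t2, t5]
  ring

/-- Commuting `∇_ξ` past `∇_X`. -/
theorem nabla_xi_comm (hn : n ≠ 0) (X Y : Derivation ℝ C C) :
    K.nabla K.ξ (K.nabla X Y) = K.nabla X (K.nabla K.ξ Y) + K.nabla (K.nabla K.ξ X) Y
      - K.nabla X Y + K.η X • K.nabla K.ξ Y + K.η Y • X - K.g X Y • K.ξ := by
  have h := K.Rm_xi_left hn X Y
  rw [Rm_eq, K.nabla_xi hn X, K.nabla_sub_left, K.nabla_smul_left] at h
  linear_combination (norm := module) (1 : C) • h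

theorem nabla_xi_xi (hn : n ≠ 0) : K.nabla K.ξ K.ξ = 0 := by
  rw [K.nabla_xi hn, K.eta_xi, one_smul, sub_self]

theorem nabla_xi_Rm (hn : n ≠ 0) (X Y Z : Derivation ℝ C C) :
    K.nabla K.ξ (K.Rm X Y Z) = K.Rm (K.nabla K.ξ X) Y Z + K.Rm X (K.nabla K.ξ Y) Z
      + K.Rm X Y (K.nabla K.ξ Z)
      - (2 : C) • (K.Rm X Y Z + K.g Y Z • X - K.g X Z • Y) := by
  have e1 : ∀ X Y, K.η (K.nabla X Y) = X (K.η Y) - K.g X Y + K.η X * K.η Y := by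
    intro X Y; rw [K.d_eta hn]; ring
  simp only [Rm_eq, K.nabla_xi_comm hn, K.nabla_add_right, K.nabla_sub_right, K.nabla_add_left,
    K.nabla_sub_left, K.nabla_leibniz, K.nabla_smul_left, K.metric_compat, K.d_eta hn,
    K.nabla_xi hn]
  rw [K.g_symm Y X]
  module

theorem nabla_xi_S (hn : n ≠ 0) (X Z : Derivation ℝ C C) :
    K.ξ (K.S X Z) = K.S (K.nabla K.ξ X) Z + K.S X (K.nabla K.ξ Z)
      - 2 * K.S X Z - 4 * (n : C) * K.g X Z := by
  have hA : ∑ i, K.g (K.Rm (K.nabla K.ξ (K.e i)) X Z) (K.e i)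
      = - ∑ i, K.g (K.Rm (K.e i) X Z) (K.nabla K.ξ (K.e i)) := by
    refine K.trace_skew (fun V => K.Rm V X Z) (fun _ _ => K.Rm_add_left _ _ _ _)
      (fun _ _ => K.Rm_smul_left _ _ _ _) (fun i => K.nabla K.ξ (K.e i)) (fun i j => ?_)
    have h := K.metric_compat K.ξ (K.e i) (K.e j)
    have h0 : K.ξ (K.g (K.e i) (K.e j)) = 0 := by
      rw [K.g_frame]; split_ifs <;> simp
    rw [h0] at h
    linear_combination -h
  have t3 := K.frame_sum Z X
  have t5 := K.frame_trace
  have hi : ∀ i, K.ξ (K.g (K.Rm (K.e i) X Z) (K.e i))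
      = K.g (K.Rm (K.nabla K.ξ (K.e i)) X Z) (K.e i)
        + K.g (K.Rm (K.e i) (K.nabla K.ξ X) Z) (K.e i)
        + K.g (K.Rm (K.e i) X (K.nabla K.ξ Z)) (K.e i)
        - 2 * K.g (K.Rm (K.e i) X Z) (K.e i)
        - 2 * K.g X Z * K.g (K.e i) (K.e i) + 2 * (K.g Z (K.e i) * K.g (K.e i) X)
        + K.g (K.Rm (K.e i) X Z) (K.nabla K.ξ (K.e i)) := by
    intro i
    rw [K.metric_compat, K.nabla_xi_Rm hn]
    simp only [K.g_add_left, K.g_sub_left, K.g_smul_left]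
    rw [K.g_symm X (K.e i), K.g_symm (K.e i) Z]
    ring
  unfold S
  rw [map_sum]
  simp only [hi, Finset.sum_add_distrib, Finset.sum_sub_distrib, ← Finset.mul_sum, t3, t5, hA]
  rw [K.g_symm Z X]
  ring

theorem main_pos (hn : n ≠ 0) (f l : C) (F : Derivation ℝ C C)
    (h : K.IsGradAlmostStarRicciSoliton f F l) (X Z : Derivation ℝ C C) :
    K.S X Z = (K.ξ (f + l) - (2 * (n : C) + 1)) * K.g X Z
      + (1 - K.ξ (f + l)) * (K.η X * K.η Z) := by
  obtain ⟨hF, hS⟩ := h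
  have hA : ∀ X Y, K.g (K.nabla X F) Y
      = - K.S X Y - (2 * (n : C) - 1 + l) * K.g X Y - K.η X * K.η Y := by
    intro X Y
    have := hS X Y
    rw [K.Sstar_eq hn] at this
    linear_combination this
  have hx : K.nabla K.ξ F = - (l • K.ξ) := by
    apply K.g_ext
    intro Y
    rw [hA, K.S_symm, K.S_xi hn, K.g_neg_left, K.g_smul_left, K.g_xi_left, K.eta_xi]
    ring
  have key : ∀ X Z, K.S X Z = (K.ξ (f + l) - (2 * (n : C) + 1)) * K.g X Z
      - X (f + l) * K.η Z + K.η X * K.η Z := by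
    intro X Z
    have hR := congrArg (fun V => K.g V Z) (K.Rm_xi_left hn X F)
    have hf : K.η F = K.ξ f := by rw [K.eta_def, hF]
    have hd := congrArg K.ξ (hA X Z)
    have hz : K.ξ (2 * (n : C) - 1 + l) = K.ξ l := by
      have : (2 * (n : C) - 1) = algebraMap ℝ C (2 * n - 1) := by
        rw [map_sub, map_mul, map_natCast, map_one, map_ofNat]
      rw [this, map_add, Derivation.map_algebraMap, zero_add]
    rw [K.metric_compat, map_sub, map_sub, map_neg, Derivation.leibniz, Derivation.leibniz, hz,
      K.nabla_xi_S hn, K.metric_compat, K.d_eta hn, K.d_eta hn, K.eta_xi, K.g_xi_left,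
      K.g_xi_left] at hd
    rw [hA] at hd
    rw [Rm_eq, hx, K.nabla_xi hn X, K.nabla_sub_left, K.nabla_smul_left, hx, K.nabla_neg_right,
      K.nabla_leibniz, K.nabla_xi hn X, hf, K.g_symm X F, hF] at hR
    simp only [K.g_add_left, K.g_sub_left, K.g_neg_left, K.g_smul_left, hA, K.g_xi_left] at hR
    simp only [smul_eq_mul] at hd
    rw [map_add, map_add]
    linear_combination hR - hd
  have k2 : X (f + l) = K.η X * K.ξ (f + l) := by
    have h1 := key X K.ξ
    have h2 := key K.ξ X
    rw [K.S_symm, K.g_symm, K.eta_xi] at h2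
    rw [K.eta_xi] at h1
    linear_combination h1 - h2
  rw [key, k2]
  ring

theorem main_zero (K : KenmotsuManifold 0 C) (a : C) (X Z : Derivation ℝ C C) :
    K.S X Z = (a - 1) * K.g X Z + (1 - a) * (K.η X * K.η Z) := by
  have hg : ∀ X Y, K.g X (K.e 0) * K.g (K.e 0) Y = K.g X Y := by
    intro X Y
    rw [← K.frame_sum X Y]
    exact (Fin.sum_univ_one (fun i => K.g X (K.e i) * K.g (K.e i) Y)).symm
  have hX : X = K.g X (K.e 0) • K.e 0 := by
    conv_lhs => rw [K.frame_span X]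
    exact Fin.sum_univ_one (fun i => K.g X (K.e i) • K.e i)
  have h0 : ∀ V Z, K.Rm V V Z = 0 := by
    intro V Z; rw [Rm_eq]; simp
  have hS : K.S X Z = 0 := by
    have : K.S X Z = K.g (K.Rm (K.e 0) X Z) (K.e 0) :=
      Fin.sum_univ_one (fun i => K.g (K.Rm (K.e i) X Z) (K.e i))
    rw [this, hX, K.Rm_smul_mid, h0, smul_zero, K.g_zero_left]
  have h1 := hg K.ξ K.ξ
  have h2 := hg X K.ξ
  have h3 := hg K.ξ Z
  have h4 := hg X Z
  rw [K.g_xi_right, K.g_xi_right, K.g_xi_left, K.eta_xi] at h1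
  rw [K.g_xi_right, K.g_xi_right] at h2
  rw [K.g_xi_left, K.g_xi_left] at h3
  rw [hS, ← h2, ← h3, ← h4]
  linear_combination (a - 1) * K.g X (K.e 0) * K.g (K.e 0) Z * h1

end Basic

end KenmotsuManifold

open KenmotsuManifold in
/-- If the metric of a Kenmotsu manifold of dimension `2n+1` is a
gradient almost `*`-Ricci soliton, then
`S(X,Z) = (ξ(f+λ) - 2n - 1) g(X,Z) + (1 - ξ(f+λ)) η(X)η(Z)`,
i.e. the manifold is `η`-Einstein. -/
theorem stmt14 {n : ℕ} {C : Type*} [CommRing C] [Algebra ℝ C]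
    (K : KenmotsuManifold n C) (f l : C) (F : Derivation ℝ C C)
    (h : K.IsGradAlmostStarRicciSoliton f F l) (X Z : Derivation ℝ C C) :
    K.S X Z = (K.ξ (f + l) - algebraMap ℝ C (2 * n + 1)) * K.g X Z
      + (1 - K.ξ (f + l)) * (K.η X * K.η Z) := by
  rcases Nat.eq_zero_or_pos n with hn | hn
  · subst hn
    have := K.main_zero (K.ξ (f + l)) X Z
    simpa using this
  · have := K.main_pos hn.ne' f l F h X Z
    rw [this, map_add (algebraMap ℝ C), map_mul, map_natCast, map_one, map_ofNat]
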